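/- Let R be a commutative Noetherian ring, I an ideal with IM ≠ M for a finite R-module M. Then grade(I, M), the maximal length of an M-regular sequence contained in I, equals min{i : Ext^i_R(R/I, M) ≠ 0}. -/

import Mathlib

open CategoryTheory

noncomputable def extGroup (R : Type) [CommRing R] (i : ℕ) (M N : Type)
    [AddCommGroup M] [Module R M] [AddCommGroup N] [Module R N] : Type :=
  ((Ext R (ModuleCat R) i).obj (Opposite.op (ModuleCat.of R M))).obj (ModuleCat.of R N)

noncomputable instance (R : Type) [CommRing R] (i : ℕ) (M N : Type)
    [AddCommGroup M] [Module R M] [AddCommGroup N] [Module R N] :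
    AddCommGroup (extGroup R i M N) := by unfold extGroup; infer_instance

noncomputable instance (R : Type) [CommRing R] (i : ℕ) (M N : Type)
    [AddCommGroup M] [Module R M] [AddCommGroup N] [Module R N] :
    Module R (extGroup R i M N) := by unfold extGroup; infer_instance

/-- The depth of a Noetherian local ring `A`, i.e. `grade(𝔪, A)`:
the least `i` with `Ext^i_A(A/𝔪, A) ≠ 0`. -/
noncomputable def depthOf (A : Type) [CommRing A] [IsLocalRing A] : ℕ :=
  sInf {i | Nontrivial (extGroup A i (IsLocalRing.ResidueField A) A)}

/-!
By Rees' theorem, `I` contains an `M`-regular sequence of length `n` exactly when `Ext^i(R/I, M)`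
vanishes for all `i < n`, that is, when `n` is a lower bound of `{i | Ext^i(R/I, M) ≠ 0}`. As
`IM ≠ M`, some prime `p ⊇ I` lies in the support of `M`; localizing at `p` bounds these lengths by
the height of `p`. Hence some `Ext^i(R/I, M)` is nonzero, and the least such `i` is the largest
lower bound, which is the maximal length.

Mathlib proves Rees' theorem for `CategoryTheory.Abelian.Ext`, defined through the derived category,
while `extGroup` is a left derived functor. Both are computed by a projective resolution.
-/

section Ext

variable {R C : Type*} [Ring R] [Category* C] [Abelian C] [Linear R C]

lemma exactAt_linearYonedaObj_zero_iff (K : ChainComplex C ℕ) (Y : C) :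
    (K.linearYonedaObj R Y).ExactAt 0 ↔ ∀ f : K.X 0 ⟶ Y, K.d 1 0 ≫ f = 0 → f = 0 := by
  rw [HomologicalComplex.exactAt_iff' _ 0 0 1 CochainComplex.prev_nat_zero (by simp),
    ShortComplex.moduleCat_exact_iff]
  refine forall₂_congr fun f _ ↦ ⟨?_, fun hf ↦ ⟨0, Limits.comp_zero.trans hf.symm⟩⟩
  rintro ⟨g, rfl⟩
  exact (congrArg (· ≫ g) (K.shape 0 0 (by simp))).trans Limits.zero_comp

lemma exactAt_linearYonedaObj_succ_iff (K : ChainComplex C ℕ) (Y : C) (n : ℕ) :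
    (K.linearYonedaObj R Y).ExactAt (n + 1) ↔ ∀ f : K.X (n + 1) ⟶ Y,
      K.d (n + 2) (n + 1) ≫ f = 0 → ∃ g : K.X n ⟶ Y, K.d (n + 1) n ≫ g = f := by
  rw [HomologicalComplex.exactAt_iff' _ n (n + 1) (n + 2) (by simp) (by simp),
    ShortComplex.moduleCat_exact_iff]
  rfl

lemma exactAt_zero_linearYonedaObj_iff_subsingleton_hom {X : C} (P : ProjectiveResolution X)
    (Y : C) : (P.complex.linearYonedaObj R Y).ExactAt 0 ↔ Subsingleton (X ⟶ Y) := by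
  rw [exactAt_linearYonedaObj_zero_iff]
  change _ ↔ Subsingleton (((ChainComplex.single₀ C).obj X).X 0 ⟶ Y)
  refine ⟨fun h ↦ subsingleton_of_forall_eq 0 fun g ↦ ?_, fun _ f hf ↦ ?_⟩
  · refine Limits.zero_of_epi_comp (P.π.f 0) (h _ ?_)
    rw [← Category.assoc, P.complex_d_comp_π_f_zero, Limits.zero_comp]
  · obtain ⟨g, rfl⟩ := P.exact₀.desc' f hf
    rw [Subsingleton.elim g 0, Limits.comp_zero]

variable [HasExt C]

lemma exactAt_linearYonedaObj_iff_subsingleton_ext {X : C} (P : ProjectiveResolution X) (Y : C)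
    (n : ℕ) : (P.complex.linearYonedaObj R Y).ExactAt n ↔ Subsingleton (Abelian.Ext X Y n) := by
  cases n with
  | zero =>
    rw [exactAt_zero_linearYonedaObj_iff_subsingleton_hom,
      Abelian.Ext.addEquiv₀.toEquiv.subsingleton_congr]
  | succ n =>
    rw [exactAt_linearYonedaObj_succ_iff]
    refine ⟨fun h ↦ subsingleton_of_forall_eq 0 fun e ↦ ?_, fun _ f hf ↦ ?_⟩
    · obtain ⟨f, hf, rfl⟩ := P.extMk_surjective e _ rfl
      exact (P.extMk_eq_zero_iff f _ rfl hf n rfl).mpr (h f hf)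
    · exact (P.extMk_eq_zero_iff f _ rfl hf n rfl).mp (Subsingleton.elim _ _)

variable (R) in
lemma isZero_ext_obj_obj_iff_subsingleton_ext [EnoughProjectives C] (X Y : C) (n : ℕ) :
    Limits.IsZero (((Ext R C n).obj (Opposite.op X)).obj Y) ↔
      Subsingleton (Abelian.Ext X Y n) := by
  let P := projectiveResolution X
  rw [(P.isoExt n Y).isZero_iff, ← HomologicalComplex.exactAt_iff_isZero_homology,
    exactAt_linearYonedaObj_iff_subsingleton_ext P]

end Ext

lemma nontrivial_extGroup_iff {R : Type} [CommRing R] {n : ℕ} {M N : Type}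
    [AddCommGroup M] [Module R M] [AddCommGroup N] [Module R N] :
    Nontrivial (extGroup R n M N) ↔
      Nontrivial (Abelian.Ext (ModuleCat.of R M) (ModuleCat.of R N) n) := by
  rw [← not_subsingleton_iff_nontrivial, ← not_subsingleton_iff_nontrivial,
    ← isZero_ext_obj_obj_iff_subsingleton_ext R, ModuleCat.isZero_iff_subsingleton]
  rfl

section RegularSequence

open RingTheory.Sequence

lemma exists_mem_support_le_of_smul_top_ne_top {R M : Type*} [CommRing R] [AddCommGroup M]
    [Module R M] [Module.Finite R M] {I : Ideal R} (hIM : I • (⊤ : Submodule R M) ≠ ⊤) :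
    ∃ p ∈ Module.support R M, I ≤ p.asIdeal := by
  have : Nontrivial (M ⧸ I • (⊤ : Submodule R M)) := Submodule.Quotient.nontrivial_iff.mpr hIM
  obtain ⟨p, hp⟩ := Module.nonempty_support_of_nontrivial (R := R)
    (M := M ⧸ I • (⊤ : Submodule R M))
  rw [Module.support_quotient] at hp
  exact ⟨p, hp⟩

lemma length_le_supportDim_of_isRegular {R M : Type*} [CommRing R] [IsNoetherianRing R]
    [IsLocalRing R] [AddCommGroup M] [Module R M] [Module.Finite R M] {rs : List R}
    (hrs : IsRegular M rs) : rs.length ≤ Module.supportDim R M := by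
  have : Nontrivial (M ⧸ Ideal.ofList rs • (⊤ : Submodule R M)) :=
    hrs.quot_ofList_smul_nontrivial ⊤
  rw [← Module.supportDim_add_length_eq_supportDim_of_isRegular rs hrs]
  have := (Module.nonempty_support_of_nontrivial (R := R)
    (M := M ⧸ Ideal.ofList rs • (⊤ : Submodule R M))).to_subtype
  exact le_add_of_nonneg_left Order.krullDim_nonneg

variable {R : Type*} [CommRing R] [IsNoetherianRing R]

lemma length_le_height_of_isWeaklyRegular {M : Type*} [AddCommGroup M] [Module R M]
    [Module.Finite R M] {p : PrimeSpectrum R} (hp : p ∈ Module.support R M) {rs : List R}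
    (hmem : ∀ x ∈ rs, x ∈ p.asIdeal) (hrs : IsWeaklyRegular M rs) :
    rs.length ≤ p.asIdeal.height := by
  let Rₚ := Localization.AtPrime p.asIdeal
  let Mₚ := LocalizedModule.AtPrime p.asIdeal M
  have : Nontrivial Mₚ := hp
  have hreg : IsRegular Mₚ (rs.map (algebraMap R Rₚ)) :=
    hrs.isRegular_of_isLocalizedModule_of_mem Rₚ p.asIdeal
      (LocalizedModule.mkLinearMap p.asIdeal.primeCompl M) hmem
  have hdim : (rs.length : WithBot ℕ∞) ≤ p.asIdeal.height := calc
    (rs.length : WithBot ℕ∞) = (rs.map (algebraMap R Rₚ)).length := by rw [List.length_map]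
    _ ≤ Module.supportDim Rₚ Mₚ := length_le_supportDim_of_isRegular hreg
    _ ≤ ringKrullDim Rₚ := Module.supportDim_le_ringKrullDim Rₚ Mₚ
    _ = p.asIdeal.height := IsLocalization.AtPrime.ringKrullDim_eq_height p.asIdeal Rₚ
  exact_mod_cast hdim

lemma bddAbove_setOf_length_isRegular {M : Type*} [AddCommGroup M] [Module R M]
    [Module.Finite R M] {I : Ideal R} (hIM : I • (⊤ : Submodule R M) ≠ ⊤) :
    BddAbove {n : ℕ | ∃ rs : List R, rs.length = n ∧ (∀ x ∈ rs, x ∈ I) ∧ IsRegular M rs} := by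
  obtain ⟨p, hp, hIp⟩ := exists_mem_support_le_of_smul_top_ne_top hIM
  obtain ⟨h, hh⟩ := ENat.ne_top_iff_exists.mp (Ideal.height_ne_top_of_isPrime (I := p.asIdeal))
  refine ⟨h, ?_⟩
  rintro _ ⟨rs, rfl, hmem, hrs⟩
  have hle := length_le_height_of_isWeaklyRegular hp (fun x hx ↦ hIp (hmem x hx))
    hrs.toIsWeaklyRegular
  exact_mod_cast hle.trans_eq hh.symm

universe v

variable [Small.{v} R] {M N : ModuleCat.{v} R} [Module.Finite R M] [Module.Finite R N] {I : Ideal R}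

lemma setOf_length_isRegular_eq_lowerBounds (hIM : I • (⊤ : Submodule R M) ≠ ⊤)
    (hN : Module.support R N = PrimeSpectrum.zeroLocus I) :
    {n : ℕ | ∃ rs : List R, rs.length = n ∧ (∀ x ∈ rs, x ∈ I) ∧ IsRegular M rs} =
      lowerBounds {i : ℕ | Nontrivial (Abelian.Ext N M i)} := by
  ext n
  have hrees : (∃ rs : List R, rs.length = n ∧ (∀ x ∈ rs, x ∈ I) ∧ IsRegular M rs) ↔
      ∀ i < n, Subsingleton (Abelian.Ext N M i) := by
    refine ⟨?_, ModuleCat.exists_isRegular_of_exists_subsingleton_ext I n M hIM.lt_top N hN⟩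
    rintro ⟨rs, rfl, hmem, hrs⟩
    exact ModuleCat.subsingleton_ext_of_exists_isRegular I N hN.subset M hIM.lt_top rs hmem hrs
  simp only [Set.mem_ofPred_eq, hrees, mem_lowerBounds, ← not_subsingleton_iff_nontrivial,
    not_imp_comm, not_le]

theorem grade_eq_min_ext_ne_zero_general (hIM : I • (⊤ : Submodule R M) ≠ ⊤)
    (hN : Module.support R N = PrimeSpectrum.zeroLocus I) :
    ∃ g : ℕ,
      IsGreatest {r : ℕ | ∃ rs : List R, rs.length = r ∧ (∀ x ∈ rs, x ∈ I) ∧ IsRegular M rs} g ∧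
        IsLeast {i : ℕ | Nontrivial (Abelian.Ext N M i)} g := by
  have hbdd := bddAbove_setOf_length_isRegular hIM
  rw [setOf_length_isRegular_eq_lowerBounds hIM hN] at hbdd ⊢
  have hne : {i : ℕ | Nontrivial (Abelian.Ext N M i)}.Nonempty := by
    by_contra! hempty
    rw [hempty, lowerBounds_empty] at hbdd
    exact not_bddAbove_univ hbdd
  have hleast := isLeast_csInf hne
  exact ⟨_, hleast.isGLB, hleast⟩

end RegularSequence

/-- For a commutative Noetherian ring `R`, a finite `R`-module `M` and an ideal
`I` with `IM ≠ M`, the maximal length of an `M`-regular sequence contained in `I` equals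
`min {i | Ext^i_R(R/I, M) ≠ 0}`. -/
theorem grade_eq_min_ext_ne_zero
    (R : Type) [CommRing R] [IsNoetherianRing R]
    (M : Type) [AddCommGroup M] [Module R M] [Module.Finite R M]
    (I : Ideal R) (hIM : I • (⊤ : Submodule R M) ≠ ⊤) :
    sSup {r : ℕ | ∃ rs : List R, rs.length = r ∧ (∀ x ∈ rs, x ∈ I) ∧
        RingTheory.Sequence.IsRegular M rs} =
      sInf {i | Nontrivial (extGroup R i (R ⧸ I) M)} := by
  have hsupp : Module.support R (R ⧸ I) = PrimeSpectrum.zeroLocus I := by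
    rw [Module.support_eq_zeroLocus, Ideal.annihilator_quotient]
  obtain ⟨g, hmax, hmin⟩ := grade_eq_min_ext_ne_zero_general (M := ModuleCat.of R M)
    (N := ModuleCat.of R (R ⧸ I)) hIM hsupp
  simp only [nontrivial_extGroup_iff]
  exact hmax.csSup_eq.trans hmin.csInf_eq.symm
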